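/- arXiv:2401.12968 — 2 statements merged into one kernel-verified Lean document; each statement's English description precedes it below -/
import Mathlib

section
/- As the half-integer S tends to infinity, α_GP(S) → α_BOV and α_L(S) → α_BOV, where α_GP(S) = inf_{ρ∈[−1,0)} f_S(ρ), α_BOV = inf_{ρ∈[−1,0)} g(ρ), and α_L(S) = (S/(S+1))² α_BOV. -/
open Matrix MeasureTheory Filter
open scoped BigOperators RealInnerProductSpace Kronecker

noncomputable section

/-- The spin value `S = n/2` for a half-integer spin encoded by `n : ℕ` (`n ≥ 1` means `S ≥ 1/2`). -/
def spinVal (n : ℕ) : ℝ := (n : ℝ) / 2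

/-- The Gauss hypergeometric function `₂F₁(1/2, 1/2; 5/2; x)`, defined by its power series
`Σ_{k≥0} ((1/2)_k (1/2)_k)/((5/2)_k k!) x^k`, where `(a)_k` is the rising factorial. -/
def hypF (x : ℝ) : ℝ :=
  ∑' k : ℕ,
    ((∏ m ∈ Finset.range k, ((1:ℝ)/2 + m)) * (∏ m ∈ Finset.range k, ((1:ℝ)/2 + m))
      / ((∏ m ∈ Finset.range k, ((5:ℝ)/2 + m)) * (Nat.factorial k))) * x ^ k

/-- `F*(3, ρ) = (8/(3π)) ρ ₂F₁(1/2,1/2;5/2;ρ²)`. -/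
def Fstar (ρ : ℝ) : ℝ := (8 / (3 * Real.pi)) * ρ * hypF (ρ ^ 2)

/-- `f_S(ρ) = (1 − F*(3,ρ)) / (1 − ((S+1)/S) ρ)`. -/
def fS (S ρ : ℝ) : ℝ := (1 - Fstar ρ) / (1 - ((S + 1) / S) * ρ)

/-- `g(ρ) = (1 − F*(3,ρ)) / (1 − ρ)`. -/
def gBOV (ρ : ℝ) : ℝ := (1 - Fstar ρ) / (1 - ρ)

/-- `α_GP(S) = inf_{ρ ∈ [−1, 0)} f_S(ρ)`. -/
def alphaGP (S : ℝ) : ℝ := sInf (fS S '' Set.Ico (-1 : ℝ) 0)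

/-- `α_BOV = inf_{ρ ∈ [−1, 0)} g(ρ)`. -/
def alphaBOV : ℝ := sInf (gBOV '' Set.Ico (-1 : ℝ) 0)

theorem hypF_nonneg (x : ℝ) (hx : 0 ≤ x) : 0 ≤ hypF x := by
  unfold hypF
  refine tsum_nonneg fun k => ?_
  have h1 : 0 ≤ ∏ m ∈ Finset.range k, ((1:ℝ)/2 + m) :=
    Finset.prod_nonneg fun m _ => by positivity
  have h2 : 0 ≤ ∏ m ∈ Finset.range k, ((5:ℝ)/2 + m) :=
    Finset.prod_nonneg fun m _ => by positivity
  positivity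

theorem one_sub_Fstar_nonneg (r : ℝ) (hr : r < 0) : 0 ≤ 1 - Fstar r := by
  have h := hypF_nonneg (r ^ 2) (sq_nonneg r)
  have hp : 0 ≤ 8 / (3 * Real.pi) := by positivity
  have h3 : 0 ≤ (8 / (3 * Real.pi)) * (-r) * hypF (r ^ 2) :=
    mul_nonneg (mul_nonneg hp (by linarith)) h
  unfold Fstar
  nlinarith

theorem gBOV_nonneg (r : ℝ) (hr : r < 0) : 0 ≤ gBOV r :=
  div_nonneg (one_sub_Fstar_nonneg r hr) (by linarith)

theorem fS_le (S r : ℝ) (hS : 0 < S) (hr : r < 0) : fS S r ≤ gBOV r := by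
  unfold fS gBOV
  have hc : (S + 1) / S = 1 + 1 / S := by field_simp
  have h1 : 0 < 1 / S := by positivity
  apply div_le_div_of_nonneg_left (one_sub_Fstar_nonneg r hr) (by linarith)
  rw [hc]
  nlinarith

theorem le_fS (S r : ℝ) (hS : 0 < S) (hr : r < 0) : S / (S + 1) * gBOV r ≤ fS S r := by
  unfold fS gBOV
  have hc : (S + 1) / S = 1 + 1 / S := by field_simp
  have h1 : 0 < 1 / S := by positivity
  have h0 := one_sub_Fstar_nonneg r hr
  have e : S / (S + 1) * ((1 - Fstar r) / (1 - r))
      = (1 - Fstar r) / ((S + 1) / S * (1 - r)) := by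
    have : 1 - r ≠ 0 := by linarith
    field_simp
  rw [e]
  apply div_le_div_of_nonneg_left h0
  · rw [hc]; nlinarith
  · rw [hc]; nlinarith

theorem alphaGP_bounds (S : ℝ) (hS : 0 < S) :
    S / (S + 1) * alphaBOV ≤ alphaGP S ∧ alphaGP S ≤ alphaBOV := by
  have hne : (Set.Ico (-1 : ℝ) 0).Nonempty := ⟨-1, by norm_num⟩
  have hq : 0 ≤ S / (S + 1) := by positivity
  have hbg : BddBelow (gBOV '' Set.Ico (-1 : ℝ) 0) := by
    refine ⟨0, ?_⟩
    rintro _ ⟨r, hr, rfl⟩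
    exact gBOV_nonneg r hr.2
  have hbf : BddBelow (fS S '' Set.Ico (-1 : ℝ) 0) := by
    refine ⟨0, ?_⟩
    rintro _ ⟨r, hr, rfl⟩
    exact (mul_nonneg hq (gBOV_nonneg r hr.2)).trans (le_fS S r hS hr.2)
  constructor
  · refine le_csInf (hne.image _) ?_
    rintro _ ⟨r, hr, rfl⟩
    exact (mul_le_mul_of_nonneg_left (csInf_le hbg ⟨r, hr, rfl⟩) hq).trans (le_fS S r hS hr.2)
  · refine le_csInf (hne.image _) ?_
    rintro _ ⟨r, hr, rfl⟩
    exact (csInf_le hbf ⟨r, hr, rfl⟩).trans (fS_le S r hS hr.2)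

theorem ratio_tendsto :
    Tendsto (fun n : ℕ => spinVal n / (spinVal n + 1)) atTop (nhds 1) := by
  have h := tendsto_natCast_div_add_atTop (𝕜 := ℝ) (2 : ℝ)
  refine h.congr fun n => ?_
  unfold spinVal
  have : (n : ℝ) + 2 ≠ 0 := by positivity
  have : (n : ℝ) / 2 + 1 ≠ 0 := by positivity
  field_simp

/-- As the half-integer `S = n/2` tends to infinity, `α_GP(S) → α_BOV` and
`α_L(S) = (S/(S+1))² α_BOV → α_BOV`. -/
theorem alphaGP_alphaL_tendsto_alphaBOV :
    Tendsto (fun n : ℕ => alphaGP (spinVal n)) atTop (nhds alphaBOV)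
      ∧ Tendsto (fun n : ℕ => (spinVal n / (spinVal n + 1)) ^ 2 * alphaBOV)
          atTop (nhds alphaBOV) := by
  constructor
  · have h := ratio_tendsto.mul_const alphaBOV
    rw [one_mul] at h
    have hb : ∀ᶠ n : ℕ in atTop, 0 < spinVal n := by
      filter_upwards [eventually_gt_atTop 0] with n hn
      unfold spinVal
      positivity
    refine tendsto_of_tendsto_of_tendsto_of_le_of_le' h tendsto_const_nhds ?_ ?_
    · filter_upwards [hb] with n hn using (alphaGP_bounds _ hn).1
    · filter_upwards [hb] with n hn using (alphaGP_bounds _ hn).2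
  · have h := (ratio_tendsto.pow 2).mul_const alphaBOV
    simpa using h

end
end

section
/- The function g satisfies g(−1) = g(0) = 1 and g(ρ) > 1 for all ρ ∈ (0,1); consequently inf_{ρ∈[−1,1)} g(ρ) = inf_{ρ∈[−1,0)} g(ρ), and this infimum is attained at some point of [−1,0). -/
open Matrix MeasureTheory Filter
open scoped BigOperators RealInnerProductSpace Kronecker

noncomputable section

def tC (c : ℝ) (k : ℕ) : ℝ :=
  ((∏ m ∈ Finset.range k, ((1:ℝ)/2 + m)) * (∏ m ∈ Finset.range k, ((1:ℝ)/2 + m))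
      / ((∏ m ∈ Finset.range k, (c + m)) * (Nat.factorial k)))

lemma tC_zero (c : ℝ) : tC c 0 = 1 := by simp [tC]

lemma tC_prod_pos (c : ℝ) (hc : 0 < c) (k : ℕ) : 0 < ∏ m ∈ Finset.range k, (c + m) :=
  Finset.prod_pos (fun i _ => by positivity)

lemma tC_pos (c : ℝ) (hc : 0 < c) (k : ℕ) : 0 < tC c k := by
  unfold tC
  have h1 := tC_prod_pos c hc k
  have h2 := tC_prod_pos (1/2) (by norm_num) k
  have h3 : (0:ℝ) < Nat.factorial k := by exact_mod_cast Nat.factorial_pos k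
  exact div_pos (mul_pos h2 h2) (mul_pos h1 h3)

lemma tC_succ (c : ℝ) (hc : 0 < c) (k : ℕ) :
    tC c (k+1) = tC c k * (((k:ℝ)+1/2)^2 / ((c+k)*(k+1))) := by
  unfold tC
  have h1 := (tC_prod_pos c hc k).ne'
  have h3 : (Nat.factorial k : ℝ) ≠ 0 := by exact_mod_cast Nat.factorial_ne_zero k
  have h4 : c + k ≠ 0 := by positivity
  rw [Finset.prod_range_succ, Finset.prod_range_succ, Nat.factorial_succ]
  push_cast
  field_simp
  ring

lemma tC_shift (c : ℝ) (hc : 0 < c) (k : ℕ) : tC (c+1) k = tC c k * (c / (c+k)) := by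
  induction k with
  | zero => simp [tC_zero, hc.ne']
  | succ k ih =>
    have h4 : c + k ≠ 0 := by positivity
    have h5 : c + 1 + k ≠ 0 := by positivity
    have h6 : c + (k + 1) ≠ 0 := by positivity
    rw [tC_succ _ (by positivity), tC_succ _ hc, ih]
    push_cast
    rw [show c + 1 + (k:ℝ) = c + (k+1) by ring]
    field_simp

lemma tC_bound (k : ℕ) : tC (5/2) k ≤ 1 / ((k:ℝ)+1)^2 := by
  induction k with
  | zero => simp [tC_zero]
  | succ k ih =>
    rw [tC_succ _ (by norm_num)]
    have hk : (0:ℝ) ≤ k := k.cast_nonneg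
    calc _ ≤ 1 / ((k:ℝ)+1)^2 * (((k:ℝ)+1/2)^2 / ((5/2+k)*(k+1))) := by gcongr
      _ ≤ _ := by
        push_cast
        rw [div_mul_div_comm, div_le_div_iff₀ (by positivity) (by positivity)]
        have : 0 ≤ (k:ℝ)^2 := by positivity
        have : 0 ≤ (k:ℝ)^3 := by positivity
        nlinarith

lemma tC_bound' (N : ℕ) (k : ℕ) : tC (5/2 + N) k ≤ 1 / ((k:ℝ)+1)^2 := by
  induction N with
  | zero => simpa using tC_bound k
  | succ N ih =>
    refine le_trans ?_ ih
    push_cast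
    rw [← add_assoc, tC_shift _ (by positivity)]
    have := tC_pos (5/2+N) (by positivity) k
    apply mul_le_of_le_one_right this.le
    rw [div_le_one (by positivity)]
    have hk : (0:ℝ) ≤ k := k.cast_nonneg
    linarith

lemma summ_sq : Summable (fun k : ℕ => 1 / ((k:ℝ)+1)^2) := by
  have := (summable_nat_add_iff 1).2 (Real.summable_one_div_nat_pow.2 (by norm_num : 1 < 2))
  simpa using this

lemma tC_summable (N : ℕ) : Summable (tC (5/2 + N)) :=
  Summable.of_nonneg_of_le (fun k => (tC_pos _ (by positivity) k).le) (tC_bound' N) summ_sq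

lemma tC_tele (c : ℝ) (hc : 0 < c) (n : ℕ) :
    ∑ k ∈ Finset.range n, (c*(c-1) * tC c k - (c-1/2)^2 * tC (c+1) k) = - (c * n * tC c n) := by
  induction n with
  | zero => simp
  | succ n ih =>
    have h4 : c + n ≠ 0 := by positivity
    rw [Finset.sum_range_succ, ih, tC_shift c hc, tC_succ c hc]
    push_cast
    field_simp
    ring

lemma tC_step (N : ℕ) : ((5/2+N:ℝ)*(5/2+N-1)) * ∑' k, tC (5/2 + N) k
    = (5/2+N-1/2:ℝ)^2 * ∑' k, tC (5/2 + (N+1:ℕ)) k := by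
  have h1 := ((tC_summable N).hasSum.mul_left ((5/2+N:ℝ)*(5/2+N-1))).sub
    ((tC_summable (N+1)).hasSum.mul_left ((5/2+N-1/2:ℝ)^2))
  have h2 := h1.tendsto_sum_nat
  have h3 : Tendsto (fun n : ℕ => - ((5/2+N:ℝ) * n * tC (5/2+N) n)) atTop (nhds 0) := by
    have hz : Tendsto (fun n : ℕ => (n:ℝ) * tC (5/2+N) n) atTop (nhds 0) := by
      refine squeeze_zero (fun n => mul_nonneg n.cast_nonneg (tC_pos _ (by positivity) n).le)
        (fun n => ?_) tendsto_one_div_add_atTop_nhds_zero_nat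
      calc (n:ℝ) * tC (5/2+N) n ≤ n * (1 / ((n:ℝ)+1)^2) := by
            gcongr; exact tC_bound' N n
        _ ≤ _ := by
            rw [mul_one_div, div_le_div_iff₀ (by positivity) (by positivity)]
            have hk : (0:ℝ) ≤ n := n.cast_nonneg
            nlinarith
    have := (hz.const_mul (5/2+N:ℝ)).neg
    simpa [mul_assoc] using this
  have h4 := tendsto_nhds_unique h2 (h3.congr (fun n => by
    rw [← tC_tele (5/2+N) (by positivity) n]
    push_cast
    simp only [add_assoc]))
  linarith

lemma tC_wallis (N : ℕ) :
    ∑' k, tC (5/2) k = 3/4 * Real.Wallis.W (N+1) * ∑' k, tC (5/2 + N) k := by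
  induction N with
  | zero => 
    rw [Real.Wallis.W_succ]
    norm_num [Real.Wallis.W]
  | succ N ih =>
    have h := tC_step N
    rw [ih, Real.Wallis.W_succ (N+1)]
    have hp : (0:ℝ) < (5/2+N:ℝ)*(5/2+N-1) := by
      have hk : (0:ℝ) ≤ N := N.cast_nonneg
      apply mul_pos <;> linarith
    have h5 : ∑' k, tC (5/2 + N) k = (5/2+N-1/2:ℝ)^2 / ((5/2+N:ℝ)*(5/2+N-1))
        * ∑' k, tC (5/2 + (N+1:ℕ)) k := by
      rw [div_mul_eq_mul_div, eq_div_iff hp.ne', ← h]; ring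
    rw [h5]
    have h6 : (5/2+N-1/2:ℝ)^2 / ((5/2+N:ℝ)*(5/2+N-1)) =
      (2 * ((N+1:ℕ):ℝ) + 2) / (2 * ((N+1:ℕ):ℝ) + 1) * ((2 * ((N+1:ℕ):ℝ) + 2) / (2 * ((N+1:ℕ):ℝ) + 3)) := by
      push_cast
      rw [div_mul_div_comm, div_eq_div_iff hp.ne' (by positivity)]
      ring
    rw [h6]
    ring

lemma tC_decay (N k : ℕ) (hk : 1 ≤ k) : tC (5/2 + N) k ≤ (5/2) / (5/2+N) * (1 / ((k:ℝ)+1)^2) := by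
  have hk' : (1:ℝ) ≤ k := by exact_mod_cast hk
  induction N with
  | zero => simpa using tC_bound k
  | succ N ih =>
    push_cast
    rw [← add_assoc, tC_shift _ (by positivity)]
    calc _ ≤ (5/2) / (5/2+N) * (1 / ((k:ℝ)+1)^2) * ((5/2+N) / (5/2+N+1)) := by
          gcongr
      _ = _ := by field_simp

lemma tC_lim : Tendsto (fun N : ℕ => ∑' k, tC (5/2 + N) k) atTop (nhds 1) := by
  have hb : ∀ N : ℕ, ∑' k, tC (5/2 + N) k ≤ 1 + (5/2) / (5/2+N) * ∑' k : ℕ, 1 / ((k:ℝ)+1)^2 := by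
    intro N
    rw [(tC_summable N).tsum_eq_zero_add, tC_zero, ← tsum_mul_left]
    have hs := summ_sq.mul_left ((5/2) / (5/2+N:ℝ))
    rw [hs.tsum_eq_zero_add]
    have : ∑' k, tC (5/2 + N) (k+1) ≤ ∑' k : ℕ, (5/2) / (5/2+N:ℝ) * (1 / (((k+1:ℕ):ℝ)+1)^2) :=
      Summable.tsum_le_tsum (fun k => tC_decay N (k+1) (by omega))
        ((summable_nat_add_iff 1).2 (tC_summable N)) ((summable_nat_add_iff 1).2 hs)
    have h0 : 0 ≤ (5/2) / (5/2+N:ℝ) * (1 / (((0:ℕ):ℝ)+1)^2) := by positivity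
    linarith
  have ha : ∀ N : ℕ, 1 ≤ ∑' k, tC (5/2 + N) k := by
    intro N
    have := (tC_summable N).le_tsum 0 (fun k _ => (tC_pos _ (by positivity) k).le)
    rwa [tC_zero] at this
  refine tendsto_of_tendsto_of_tendsto_of_le_of_le tendsto_const_nhds ?_ ha hb
  have h1 : Tendsto (fun N : ℕ => (5/2:ℝ) / (5/2+N)) atTop (nhds 0) :=
    tendsto_const_nhds.div_atTop (tendsto_atTop_add_const_left _ _ tendsto_natCast_atTop_atTop)
  have h2 := (h1.mul_const (∑' k : ℕ, 1 / ((k:ℝ)+1)^2)).const_add 1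
  rw [zero_mul, add_zero] at h2
  exact h2

lemma hypF_eq (x : ℝ) : hypF x = ∑' k, tC (5/2) k * x^k := rfl

lemma tC_sum : Summable (tC (5/2)) := by simpa using tC_summable 0

lemma hypF_one : hypF 1 = 3 * Real.pi / 8 := by
  rw [hypF_eq]
  simp only [one_pow, mul_one]
  have h1 : Tendsto (fun N => 3/4 * Real.Wallis.W (N+1) * ∑' k, tC (5/2 + N) k) atTop
      (nhds (3/4 * (Real.pi/2) * 1)) :=
    (((tendsto_add_atTop_iff_nat 1).2 Real.Wallis.tendsto_W_nhds_pi_div_two).const_mul _).mul tC_lim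
  have h2 := tendsto_nhds_unique (h1.congr (fun N => (tC_wallis N).symm)) tendsto_const_nhds
  linarith

lemma tC_sum_pow (x : ℝ) (h0 : 0 ≤ x) (h1 : x ≤ 1) : Summable (fun k => tC (5/2) k * x^k) :=
  Summable.of_nonneg_of_le
    (fun k => mul_nonneg (tC_pos _ (by norm_num) k).le (pow_nonneg h0 k))
    (fun k => mul_le_of_le_one_right (tC_pos _ (by norm_num) k).le (pow_le_one₀ h0 h1)) tC_sum

lemma hypF_lt (x : ℝ) (h0 : 0 ≤ x) (h1 : x < 1) : hypF x < hypF 1 := by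
  rw [hypF_eq, hypF_eq]
  refine Summable.tsum_lt_tsum (i := 1) (fun k => ?_) ?_ (tC_sum_pow x h0 h1.le)
    (tC_sum_pow 1 (by norm_num) le_rfl)
  · have := tC_pos (5/2) (by norm_num) k
    gcongr
  · have := tC_pos (5/2) (by norm_num) 1
    simp only [pow_one]
    gcongr

lemma hypF_cont : ContinuousOn hypF (Set.Icc 0 1) := by
  have : ContinuousOn (fun x => ∑' k, tC (5/2) k * x^k) (Set.Icc (0:ℝ) 1) := by
    refine continuousOn_tsum (fun k => by fun_prop) tC_sum (fun k x hx => ?_)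
    have := tC_pos (5/2) (by norm_num) k
    rw [Real.norm_of_nonneg (mul_nonneg this.le (pow_nonneg hx.1 k))]
    exact mul_le_of_le_one_right this.le (pow_le_one₀ hx.1 hx.2)
  exact this

lemma gBOV_cont : ContinuousOn gBOV (Set.Icc (-1) 0) := by
  unfold gBOV Fstar
  have h : ContinuousOn (fun ρ : ℝ => hypF (ρ^2)) (Set.Icc (-1) 0) :=
    hypF_cont.comp (by fun_prop) (fun x hx => ⟨by positivity, by nlinarith [hx.1, hx.2]⟩)
  refine ContinuousOn.div ?_ (by fun_prop) (fun x hx => by linarith [hx.2])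
  exact continuousOn_const.sub (ContinuousOn.mul (by fun_prop) h)

/-- The function `g` satisfies `g(−1) = g(0) = 1` and `g(ρ) > 1` for all
`ρ ∈ (0,1)`; consequently `inf_{ρ∈[−1,1)} g(ρ) = inf_{ρ∈[−1,0)} g(ρ)`, and this infimum is
attained at some point of `[−1, 0)`. -/
theorem gBOV_inf_attained :
    gBOV (-1) = 1 ∧ gBOV 0 = 1
      ∧ (∀ ρ ∈ Set.Ioo (0 : ℝ) 1, 1 < gBOV ρ)
      ∧ sInf (gBOV '' Set.Ico (-1 : ℝ) 1) = sInf (gBOV '' Set.Ico (-1 : ℝ) 0)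
      ∧ ∃ ρ ∈ Set.Ico (-1 : ℝ) 0, gBOV ρ = sInf (gBOV '' Set.Ico (-1 : ℝ) 0) := by
  have hpi := Real.pi_pos
  have hm1 : gBOV (-1) = 1 := by
    unfold gBOV Fstar
    rw [show (-1:ℝ)^2 = 1 by norm_num, hypF_one]
    field_simp
  have h0 : gBOV 0 = 1 := by simp [gBOV, Fstar]
  have hgt : ∀ ρ ∈ Set.Ioo (0 : ℝ) 1, 1 < gBOV ρ := by
    intro ρ hρ
    have h1 := hypF_lt (ρ^2) (by positivity) (by nlinarith [hρ.1, hρ.2])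
    have h2 : Fstar ρ < ρ := by
      have hp : 0 < 8 / (3 * Real.pi) * ρ := mul_pos (by positivity) hρ.1
      have h3 := mul_lt_mul_of_pos_left h1 hp
      rw [hypF_one] at h3
      have h4 : 8 / (3 * Real.pi) * ρ * (3 * Real.pi / 8) = ρ := by field_simp
      rw [h4] at h3
      exact h3
    unfold gBOV
    rw [one_lt_div (by linarith [hρ.2])]
    linarith
  obtain ⟨x, hx, hmin⟩ : ∃ x ∈ Set.Ico (-1:ℝ) 0, ∀ y ∈ Set.Icc (-1:ℝ) 0, gBOV x ≤ gBOV y := by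
    obtain ⟨x, hx, hmin⟩ := isCompact_Icc.exists_isMinOn
      (Set.nonempty_Icc.2 (by norm_num : (-1:ℝ) ≤ 0)) gBOV_cont
    rcases hx.2.lt_or_eq with h | h
    · exact ⟨x, ⟨hx.1, h⟩, fun y hy => hmin hy⟩
    · refine ⟨-1, ⟨le_rfl, by norm_num⟩, fun y hy => ?_⟩
      have := hmin hy
      rw [hm1, ← h0, ← h]
      exact this
  have hx1 : gBOV x ≤ 1 := by
    rw [← h0]; exact hmin 0 ⟨by norm_num, le_rfl⟩
  have e1 : IsLeast (gBOV '' Set.Ico (-1 : ℝ) 0) (gBOV x) := by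
    refine ⟨⟨x, hx, rfl⟩, ?_⟩
    rintro _ ⟨y, hy, rfl⟩
    exact hmin y ⟨hy.1, hy.2.le⟩
  have e2 : IsLeast (gBOV '' Set.Ico (-1 : ℝ) 1) (gBOV x) := by
    refine ⟨⟨x, ⟨hx.1, by linarith [hx.2]⟩, rfl⟩, ?_⟩
    rintro _ ⟨y, hy, rfl⟩
    rcases le_or_gt y 0 with h | h
    · exact hmin y ⟨hy.1, h⟩
    · exact hx1.trans (hgt y ⟨h, hy.2⟩).le
  exact ⟨hm1, h0, hgt, by rw [e1.csInf_eq, e2.csInf_eq], x, hx, e1.csInf_eq.symm⟩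

end
end
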